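/- Let p be an odd prime, let n be a prime number, and let V = F_p^n with standard basis e_1, …, e_n. Let G = GL(n,p) be the full general linear group acting on V, and let H ≤ G be the subgroup of all linear automorphisms that fix each of e_{m+1}, …, e_n and map the span ⟨e_1, …, e_m⟩ to itself (so H acts as the full group GL(m,p) on ⟨e_1, …, e_m⟩ and as the identity on ⟨e_{m+1}, …, e_n⟩), where 1 ≤ m < n. If n − m + 1 is prime, then μ_{Î(G,H)}(H,G) = 0. -/

import Mathlib

/-!
Let `Z` be the intersection of all members of `C(G,H)`. Joining with `Z` maps `I(G,H)` to itself,
so no `K ∈ I(G,H)` satisfies `K ⊔ Z = G` when `G` is irreducible. If moreover `Z ≠ H`, Weisner's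
theorem says that the `μ(H,K)` with `K ⊔ Z = G` sum to `0`, and this sum is `μ(H,G)` alone.
A scalar stabilizes every subspace, so a scalar of `G` lies in `Z`; a scalar other than `1` moves
every nonzero vector, so it is not in `H` once `H` fixes such a vector.
-/

variable {F V : Type*} [Field F] [AddCommGroup V] [Module F V]

/-- The stabilizer in `G` of a subspace `W` of `V`: `{g ∈ G : gW = W}`. -/
def sstab (G : Subgroup (V ≃ₗ[F] V)) (W : Submodule F V) : Subgroup (V ≃ₗ[F] V) where
  carrier := {g | g ∈ G ∧ Submodule.map (g : V →ₗ[F] V) W = W}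
  one_mem' := ⟨G.one_mem, by simp⟩
  mul_mem' := by
    rintro a b ⟨ha, ha'⟩ ⟨hb, hb'⟩
    refine ⟨G.mul_mem ha hb, ?_⟩
    rw [show ((a * b : V ≃ₗ[F] V) : V →ₗ[F] V) = (a : V →ₗ[F] V).comp (b : V →ₗ[F] V) from rfl,
      Submodule.map_comp, hb', ha']
  inv_mem' := by
    rintro a ⟨ha, ha'⟩
    refine ⟨G.inv_mem ha, ?_⟩
    conv_lhs => rw [← ha']
    rw [← Submodule.map_comp]
    rw [show ((a⁻¹ : V ≃ₗ[F] V) : V →ₗ[F] V).comp (a : V →ₗ[F] V) = LinearMap.id from by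
      ext x; exact a.symm_apply_apply x]
    exact Submodule.map_id W

/-- The family `C(G,H)` of stabilizers of proper non-trivial subspaces of `V` containing `H`. -/
def Cfam (G H : Subgroup (V ≃ₗ[F] V)) : Set (Subgroup (V ≃ₗ[F] V)) :=
  {M | ∃ W : Submodule F V, W ≠ ⊥ ∧ W ≠ ⊤ ∧ H ≤ sstab G W ∧ M = sstab G W}

/-- `S(V,H)*`: the proper non-trivial `H`-invariant subspaces of `V`. -/
def SStar (H : Subgroup (V ≃ₗ[F] V)) : Set (Submodule F V) :=
  {W | W ≠ ⊥ ∧ W ≠ ⊤ ∧ ∀ g ∈ H, Submodule.map ((g : V ≃ₗ[F] V) : V →ₗ[F] V) W = W}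

/-- `Ψ(G,H)`: subsets of `C(G,H)` whose intersection (taken to be `G` when empty) is not `H`. -/
def Psi (G H : Subgroup (V ≃ₗ[F] V)) : Set (Set (Subgroup (V ≃ₗ[F] V))) :=
  {X | X ⊆ Cfam G H ∧ G ⊓ sInf X ≠ H}

/-- `Ψ(G,H)ᶜ`: non-empty subsets of `C(G,H)` whose intersection is exactly `H`. -/
def PsiC (G H : Subgroup (V ≃ₗ[F] V)) : Set (Set (Subgroup (V ≃ₗ[F] V))) :=
  {Y | Y ⊆ Cfam G H ∧ Y ≠ ∅ ∧ G ⊓ sInf Y = H}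

/-- `Ψ'(G,H)`: subsets `E` of `S(V,H)*` with `∩_{W ∈ E} stab_G(W) ≠ H`
(the empty intersection being `G`). -/
def Psi' (G H : Subgroup (V ≃ₗ[F] V)) : Set (Set (Submodule F V)) :=
  {E | E ⊆ SStar H ∧ (G ⊓ ⨅ W ∈ E, sstab G W) ≠ H}

/-- The reducible subgroup ideal `I(G,H)`. -/
def redIdeal (G H : Subgroup (V ≃ₗ[F] V)) : Set (Subgroup (V ≃ₗ[F] V)) :=
  {K | ∃ M ∈ Cfam G H, H ≤ K ∧ K ≤ M}

/-- The poset `Î(G,H) = I(G,H) ∪ {H, G}`. -/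
def Ihat (G H : Subgroup (V ≃ₗ[F] V)) : Set (Subgroup (V ≃ₗ[F] V)) :=
  redIdeal G H ∪ {H, G}

/-- A subgroup `K ≤ GL(V)` is irreducible if the only `K`-invariant subspaces are `0` and `V`. -/
def IsIrred (K : Subgroup (V ≃ₗ[F] V)) : Prop :=
  ∀ W : Submodule F V, (∀ g ∈ K, Submodule.map ((g : V ≃ₗ[F] V) : V →ₗ[F] V) W = W) →
    W = ⊥ ∨ W = ⊤

/-- `mu` is the Möbius function of the subposet of the subgroup lattice given by `S`,
ordered by inclusion: `mu x y = 0` unless `x ≤ y`, `mu x x = 1`, and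
`∑_{x ≤ t ≤ y} mu x t = 0` whenever `x < y` (all elements ranging in `S`). -/
def IsMobius (S : Set (Subgroup (V ≃ₗ[F] V)))
    (mu : Subgroup (V ≃ₗ[F] V) → Subgroup (V ≃ₗ[F] V) → ℤ) : Prop :=
  (∀ x ∈ S, ∀ y ∈ S, ¬x ≤ y → mu x y = 0) ∧
  (∀ x ∈ S, mu x x = 1) ∧
  (∀ x ∈ S, ∀ y ∈ S, x < y → (∑ᶠ t ∈ {t | t ∈ S ∧ x ≤ t ∧ t ≤ y}, mu x t) = 0)

theorem neg_one_units_ne_one_of_ringChar_ne_two {R : Type*} [Ring R] [Nontrivial R]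
    (hR : ringChar R ≠ 2) : (-1 : Rˣ) ≠ 1 :=
  fun heq ↦ Ring.neg_one_ne_one_of_char_ne_two hR (congrArg Units.val heq)

theorem finsum_mem_eq_single {ι M : Type*} [AddCommMonoid M] {s : Set ι} (f : ι → M) {a : ι}
    (ha : a ∈ s) (hf : ∀ x ∈ s, x ≠ a → f x = 0) : ∑ᶠ x ∈ s, f x = f a := by
  have hindicator : ∀ x, x ≠ a → s.indicator f x = 0 := fun x hxa ↦
    Set.indicator_apply_eq_zero.2 fun hxs ↦ hf x hxs hxa
  rw [finsum_mem_def, finsum_eq_single _ a hindicator, Set.indicator_of_mem ha]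

section Weisner

variable {α M : Type*} [SemilatticeSup α] [AddCommMonoid M] {S : Set α} {f : α → M} {h z : α}

theorem finsum_mem_Icc_fiberwise_sup (hS : S.Finite)
    (hsup : ∀ x ∈ S, x ⊔ z ∈ S) (hlower : h ∈ lowerBounds S) {y : α} (hzy : z ≤ y) :
    ∑ᶠ t ∈ {t | t ∈ S ∧ h ≤ t ∧ t ≤ y}, f t =
      ∑ᶠ w ∈ {w | w ∈ S ∧ w ≤ y}, ∑ᶠ t ∈ {t | t ∈ S ∧ t ⊔ z = w}, f t := by
  have hfiber : {t | t ∈ S ∧ h ≤ t ∧ t ≤ y} =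
      ⋃ w ∈ {w | w ∈ S ∧ w ≤ y}, {t | t ∈ S ∧ t ⊔ z = w} := by
    ext t
    simp only [Set.mem_ofPred_eq, Set.mem_iUnion, exists_prop]
    constructor
    · rintro ⟨htS, -, hty⟩
      exact ⟨t ⊔ z, ⟨hsup t htS, sup_le hty hzy⟩, htS, rfl⟩
    · rintro ⟨_, ⟨-, hwy⟩, htS, rfl⟩
      exact ⟨htS, hlower htS, le_sup_left.trans hwy⟩
  have hdisj : {w | w ∈ S ∧ w ≤ y}.PairwiseDisjoint fun w ↦ {t | t ∈ S ∧ t ⊔ z = w} :=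
    fun _ _ _ _ hne ↦ Set.disjoint_left.2 fun _ ht ht' ↦ hne (ht.2.symm.trans ht'.2)
  rw [hfiber, finsum_mem_biUnion hdisj (hS.subset fun _ hw ↦ hw.1)
    fun _ _ ↦ hS.subset fun _ ht ↦ ht.1]

/-- Weisner's theorem: after fibring the vanishing sum over `[h, y]` along `t ↦ t ⊔ z`, every
fibre other than the one over `y` contributes `0` by induction. -/
theorem finsum_mem_sup_eq_eq_zero (hS : S.Finite) (hsup : ∀ x ∈ S, x ⊔ z ∈ S)
    (hlower : h ∈ lowerBounds S) (hz : ¬z ≤ h)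
    (hf : ∀ y ∈ S, h < y → ∑ᶠ t ∈ {t | t ∈ S ∧ h ≤ t ∧ t ≤ y}, f t = 0)
    {y : α} (hy : y ∈ S) (hzy : z ≤ y) :
    ∑ᶠ t ∈ {t | t ∈ S ∧ t ⊔ z = y}, f t = 0 := by
  refine (hS.wellFoundedOn (r := (· < ·))).induction
    (P := fun y ↦ z ≤ y → ∑ᶠ t ∈ {t | t ∈ S ∧ t ⊔ z = y}, f t = 0) hy (fun y hy ih hzy ↦ ?_) hzy
  have hlt : h < y := (hlower hy).lt_of_ne fun heq ↦ hz (hzy.trans_eq heq.symm)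
  have hbelow : ∀ w ∈ {w | w ∈ S ∧ w ≤ y}, w ≠ y → ∑ᶠ t ∈ {t | t ∈ S ∧ t ⊔ z = w}, f t = 0 := by
    rintro w ⟨hwS, hwy⟩ hne
    by_cases hzw : z ≤ w
    · exact ih w hwS (hwy.lt_of_ne hne) hzw
    · exact finsum_mem_eq_zero_of_forall_eq_zero
        fun t ht ↦ absurd (le_sup_right.trans_eq ht.2) hzw
  calc ∑ᶠ t ∈ {t | t ∈ S ∧ t ⊔ z = y}, f t
      = ∑ᶠ w ∈ {w | w ∈ S ∧ w ≤ y}, ∑ᶠ t ∈ {t | t ∈ S ∧ t ⊔ z = w}, f t :=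
        (finsum_mem_eq_single _ (Set.mem_ofPred.2 ⟨hy, le_rfl⟩) hbelow).symm
    _ = ∑ᶠ t ∈ {t | t ∈ S ∧ h ≤ t ∧ t ≤ y}, f t :=
        (finsum_mem_Icc_fiberwise_sup hS hsup hlower hzy).symm
    _ = 0 := hf y hy hlt

theorem eq_zero_of_forall_sup_eq_imp_eq (hS : S.Finite) (hsup : ∀ x ∈ S, x ⊔ z ∈ S)
    (hlower : h ∈ lowerBounds S) (hz : ¬z ≤ h)
    (hf : ∀ y ∈ S, h < y → ∑ᶠ t ∈ {t | t ∈ S ∧ h ≤ t ∧ t ≤ y}, f t = 0)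
    {y : α} (hy : y ∈ S) (hzy : z ≤ y) (hfiber : ∀ t ∈ S, t ⊔ z = y → t = y) :
    f y = 0 := by
  have hsingleton : {t | t ∈ S ∧ t ⊔ z = y} = {y} :=
    Set.eq_singleton_iff_unique_mem.2
      ⟨⟨hy, sup_eq_left.2 hzy⟩, fun t ht ↦ hfiber t ht.1 ht.2⟩
  simpa only [hsingleton, finsum_mem_singleton] using
    finsum_mem_sup_eq_eq_zero hS hsup hlower hz hf hy hzy

end Weisner

section ReducibleIdeal

variable {G H K Z : Subgroup (V ≃ₗ[F] V)}

theorem sstab_le (W : Submodule F V) : sstab G W ≤ G := fun _ hg ↦ hg.1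

theorem le_of_mem_redIdeal (hK : K ∈ redIdeal G H) : K ≤ G := by
  obtain ⟨_, ⟨W, -, -, -, rfl⟩, -, hKM⟩ := hK
  exact hKM.trans (sstab_le W)

theorem self_mem_redIdeal (hHG : H ≤ G) (hH : ¬IsIrred H) : H ∈ redIdeal G H := by
  obtain ⟨W, hinv, hbot, htop⟩ : ∃ W : Submodule F V,
      (∀ g ∈ H, W.map (g : V →ₗ[F] V) = W) ∧ W ≠ ⊥ ∧ W ≠ ⊤ := by
    simpa only [IsIrred, not_forall, not_or, exists_prop] using hH
  have hle : H ≤ sstab G W := fun g hg ↦ ⟨hHG hg, hinv g hg⟩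
  exact ⟨_, ⟨W, hbot, htop, hle, rfl⟩, le_rfl, hle⟩

theorem IsIrred.notMem_redIdeal (hG : IsIrred G) : G ∉ redIdeal G H := by
  rintro ⟨_, ⟨W, hbot, htop, -, rfl⟩, -, hle⟩
  exact (hG W fun g hg ↦ (hle hg).2).elim hbot htop

theorem le_sInf_Cfam : H ≤ sInf (Cfam G H) := by
  refine le_sInf ?_
  rintro _ ⟨W, -, -, hle, rfl⟩
  exact hle

theorem sup_mem_redIdeal (hK : K ∈ redIdeal G H) (hZ : Z ≤ sInf (Cfam G H)) :
    K ⊔ Z ∈ redIdeal G H := by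
  obtain ⟨M, hM, hHK, hKM⟩ := hK
  exact ⟨M, hM, hHK.trans le_sup_left, sup_le hKM (hZ.trans (sInf_le hM))⟩

theorem Ihat_eq_insert_redIdeal (hHG : H ≤ G) (hH : ¬IsIrred H) :
    Ihat G H = insert G (redIdeal G H) := by
  rw [Ihat, Set.union_insert, Set.union_singleton,
    Set.insert_eq_of_mem (Set.mem_insert_of_mem _ (self_mem_redIdeal hHG hH))]

theorem finite_Ihat [Finite G] (hHG : H ≤ G) : (Ihat G H).Finite := by
  have : Finite (Set.Iic G) := Finite.of_equiv _ (Subgroup.MapSubtype.orderIso G).toEquiv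
  refine (Set.toFinite (Set.Iic G)).subset ?_
  rintro K (hK | rfl | rfl)
  exacts [le_of_mem_redIdeal hK, hHG, Set.self_mem_Iic]

theorem IsMobius.apply_eq_zero_of_sInf_Cfam_ne [Finite G] (hG : IsIrred G) (hHG : H ≤ G)
    (hH : ¬IsIrred H) (hne : sInf (Cfam G H) ≠ H)
    {mu : Subgroup (V ≃ₗ[F] V) → Subgroup (V ≃ₗ[F] V) → ℤ} (hmu : IsMobius (Ihat G H) mu) :
    mu H G = 0 := by
  have hHmem := self_mem_redIdeal hHG hH
  have hZG : sInf (Cfam G H) ≤ G :=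
    le_sup_right.trans (le_of_mem_redIdeal (sup_mem_redIdeal hHmem le_rfl))
  have hZH : ¬sInf (Cfam G H) ≤ H := fun hle ↦ hne (hle.antisymm le_sInf_Cfam)
  have hvanish := hmu.2.2 H (Or.inl hHmem)
  have hfin := finite_Ihat hHG
  rw [Ihat_eq_insert_redIdeal hHG hH] at hvanish hfin
  refine eq_zero_of_forall_sup_eq_imp_eq hfin ?_ ?_ hZH hvanish (Set.mem_insert _ _) hZG ?_
  · rintro K (rfl | hK)
    · exact Or.inl (sup_eq_left.2 hZG)
    · exact Or.inr (sup_mem_redIdeal hK le_rfl)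
  · rintro K (rfl | ⟨_, -, hHK, -⟩)
    exacts [hHG, hHK]
  · rintro K (rfl | hK) hsup
    · rfl
    · exact absurd (hsup ▸ sup_mem_redIdeal hK le_rfl) hG.notMem_redIdeal

end ReducibleIdeal

section LinearGroup

variable {G H : Subgroup (V ≃ₗ[F] V)} {v w : V}

instance finite_linearEquiv [Finite V] : Finite (V ≃ₗ[F] V) :=
  Finite.of_injective _ DFunLike.coe_injective

theorem exists_linearEquiv_apply_eq (hv : v ≠ 0) (hw : w ≠ 0) : ∃ g : V ≃ₗ[F] V, g v = w := by
  obtain ⟨g, hg⟩ := Submodule.exists_linearEquiv_restrict_eq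
    ((LinearEquiv.toSpanNonzeroSingleton F V v hv).symm ≪≫ₗ
      LinearEquiv.toSpanNonzeroSingleton F V w hw)
  refine ⟨g, ?_⟩
  have hgv := hg (LinearEquiv.toSpanNonzeroSingleton F V v hv 1)
  simp only [LinearEquiv.trans_apply, LinearEquiv.symm_apply_apply] at hgv
  simpa using hgv.symm

theorem isIrred_top : IsIrred (⊤ : Subgroup (V ≃ₗ[F] V)) := by
  refine fun W hinv ↦ or_iff_not_imp_left.2 fun hbot ↦ Submodule.eq_top_iff'.2 fun w ↦ ?_
  obtain ⟨v, hvW, hv⟩ := W.exists_mem_ne_zero_of_ne_bot hbot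
  rcases eq_or_ne w 0 with rfl | hw
  · exact W.zero_mem
  · obtain ⟨g, rfl⟩ := exists_linearEquiv_apply_eq (F := F) hv hw
    exact hinv g (Subgroup.mem_top g) ▸ Submodule.mem_map_of_mem hvW

theorem not_isIrred_of_forall_apply_eq (hdim : 1 < Module.finrank F V) (hv : v ≠ 0)
    (hfix : ∀ g ∈ H, g v = v) : ¬IsIrred H := by
  intro hH
  have hinv : ∀ g ∈ H, (F ∙ v).map (g : V →ₗ[F] V) = F ∙ v := fun g hg ↦ by
    rw [Submodule.map_span, Set.image_singleton, LinearEquiv.coe_coe, hfix g hg]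
  rcases hH (F ∙ v) hinv with hbot | htop
  · exact hv (Submodule.span_singleton_eq_bot.1 hbot)
  · rw [← finrank_top F V, ← htop, finrank_span_singleton hv] at hdim
    exact hdim.false

theorem toLinearEquiv_mem_sInf_Cfam {a : Fˣ} (haG : DistribMulAction.toLinearEquiv F V a ∈ G) :
    DistribMulAction.toLinearEquiv F V a ∈ sInf (Cfam G H) := by
  rw [Subgroup.mem_sInf]
  rintro _ ⟨W, -, -, -, rfl⟩
  refine ⟨haG, le_antisymm ?_ fun w hw ↦ ⟨a⁻¹ • w, W.smul_of_tower_mem _ hw, ?_⟩⟩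
  · rintro _ ⟨w, hw, rfl⟩
    exact W.smul_of_tower_mem a hw
  · simp

theorem toLinearEquiv_notMem_of_forall_apply_eq {a : Fˣ} (ha : a ≠ 1) (hv : v ≠ 0)
    (hfix : ∀ g ∈ H, g v = v) : DistribMulAction.toLinearEquiv F V a ∉ H := by
  intro haH
  have hav : (a : F) • v = (1 : F) • v := (hfix _ haH).trans (one_smul F v).symm
  exact ha (Units.ext (smul_left_injective F hv hav))

theorem IsMobius.apply_eq_zero_of_toLinearEquiv_notMem [Finite G] (hG : IsIrred G) (hHG : H ≤ G)
    (hH : ¬IsIrred H) {a : Fˣ} (haG : DistribMulAction.toLinearEquiv F V a ∈ G)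
    (haH : DistribMulAction.toLinearEquiv F V a ∉ H)
    {mu : Subgroup (V ≃ₗ[F] V) → Subgroup (V ≃ₗ[F] V) → ℤ} (hmu : IsMobius (Ihat G H) mu) :
    mu H G = 0 :=
  hmu.apply_eq_zero_of_sInf_Cfam_ne hG hHG hH fun heq ↦ haH (heq ▸ toLinearEquiv_mem_sInf_Cfam haG)

theorem mobius_Ihat_eq_zero_GL_block_general [Finite G] (hG : IsIrred G) (hHG : H ≤ G)
    (hdim : 1 < Module.finrank F V) {a : Fˣ} (ha : a ≠ 1)
    (haG : DistribMulAction.toLinearEquiv F V a ∈ G) (hv : v ≠ 0) (hfix : ∀ g ∈ H, g v = v)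
    {mu : Subgroup (V ≃ₗ[F] V) → Subgroup (V ≃ₗ[F] V) → ℤ} (hmu : IsMobius (Ihat G H) mu) :
    mu H G = 0 :=
  hmu.apply_eq_zero_of_toLinearEquiv_notMem hG hHG (not_isIrred_of_forall_apply_eq hdim hv hfix) haG
    (toLinearEquiv_notMem_of_forall_apply_eq ha hv hfix)

end LinearGroup

/-- Theorem 5.1: for `G = GL(n,p)` with `p` an odd prime and `n` prime, and
`H = GL(m,p) ⊕ I_{n−m}` the subgroup fixing the last `n − m` standard basis vectors and
stabilizing the span of the first `m`, if `n − m + 1` is prime then `μ_{Î(G,H)}(H,G) = 0`. -/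
theorem mobius_Ihat_eq_zero_GL_block (p n m : ℕ) [Fact p.Prime] (hp_odd : Odd p)
    (hn : n.Prime) (hm : 1 ≤ m) (hmn : m < n)
    (hnm : (n - m + 1).Prime)
    (W : Submodule (ZMod p) (Fin n → ZMod p))
    (hW : W = Submodule.span (ZMod p)
      {v | ∃ i : Fin n, (i : ℕ) < m ∧ v = Pi.single i (1 : ZMod p)})
    (H : Subgroup ((Fin n → ZMod p) ≃ₗ[ZMod p] (Fin n → ZMod p)))
    (hH : ∀ g : (Fin n → ZMod p) ≃ₗ[ZMod p] (Fin n → ZMod p),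
      g ∈ H ↔ ((∀ i : Fin n, m ≤ (i : ℕ) → g (Pi.single i (1 : ZMod p)) = Pi.single i 1) ∧
        Submodule.map (g : (Fin n → ZMod p) →ₗ[ZMod p] (Fin n → ZMod p)) W = W))
    (mu : Subgroup ((Fin n → ZMod p) ≃ₗ[ZMod p] (Fin n → ZMod p)) →
      Subgroup ((Fin n → ZMod p) ≃ₗ[ZMod p] (Fin n → ZMod p)) → ℤ)
    (hmu : IsMobius (Ihat (⊤ : Subgroup ((Fin n → ZMod p) ≃ₗ[ZMod p] (Fin n → ZMod p))) H) mu) :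
    mu H ⊤ = 0 := by
  have hchar : ringChar (ZMod p) ≠ 2 := by
    rw [ZMod.ringChar_zmod_n]
    rintro rfl
    exact Nat.not_odd_iff_even.2 even_two hp_odd
  exact mobius_Ihat_eq_zero_GL_block_general isIrred_top le_top (by simpa using hn.one_lt)
    (neg_one_units_ne_one_of_ringChar_ne_two hchar) (Subgroup.mem_top _)
    (v := Pi.single ⟨m, hmn⟩ 1) (by simp) (fun g hg ↦ ((hH g).1 hg).1 ⟨m, hmn⟩ le_rfl) hmu
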